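/- Let 0 < σ < 1, let P be a real homogeneous polynomial of even degree 2k in n variables with P ≠ 0, let |ε| ≤ K(σ,P)⁻¹, and let μ be the probability measure on ℝⁿ with density f(·;ε,σ,P). If a ∈ ℝⁿ is a nonzero vector with P(a) = 0, then the pushforward of μ under x ↦ aᵀx is the Gaussian distribution on ℝ with mean 0 and variance |a|². -/

import Mathlib

open MeasureTheory Real ProbabilityTheory

noncomputable def hermiteR (m : ℕ) (x : ℝ) : ℝ :=
  Polynomial.aeval x (Polynomial.hermite m)

noncomputable def renorm {n : ℕ} (P : MvPolynomial (Fin n) ℝ) (x : Fin n → ℝ) : ℝ :=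
  ∑ m ∈ P.support, P.coeff m * ∏ i, hermiteR (m i) (x i)

noncomputable def Kconst (n k : ℕ) (σ : ℝ) (P : MvPolynomial (Fin n) ℝ) : ℝ :=
  ⨆ x : Fin n → ℝ, (σ ^ (n + 2*k))⁻¹ * |renorm P x| * Real.exp (-(1 - σ^2) * (∑ i, x i ^ 2) / 2)

noncomputable def fdens (n k : ℕ) (σ ε : ℝ) (P : MvPolynomial (Fin n) ℝ) (x : Fin n → ℝ) : ℝ :=
  (2*π)^(-(n:ℝ)/2) * Real.exp (-(∑ i, x i ^ 2)/2) *
    (1 + (-1)^k * ε * (σ^(n+2*k))⁻¹ * renorm P (fun i => x i / σ) *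
      Real.exp (-(1-σ^2) * (∑ i, x i ^ 2) / (2*σ^2)))

noncomputable def gdens (n k : ℕ) (σ ε : ℝ) (P : MvPolynomial (Fin n) ℝ) (a : Fin n → ℝ) (x : ℝ) : ℝ :=
  (2*π)^(-(1:ℝ)/2) * (Real.exp (-x^2/2) +
    (-1)^k * ε * MvPolynomial.eval a P * (σ^(2*k+1))⁻¹ * hermiteR (2*k) (x/σ) * Real.exp (-x^2/(2*σ^2)))

/-!
With `φ` the standard Gaussian density, `fdens` is `φ x + c * (renorm P (x / σ) * φ (x / σ))`.
The derivative of `H_m φ` is `-H_{m+1} φ`, so the Fourier transform turns Hermite polynomials into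
monomials, and the transform of `renorm P * φ` at `b` is `P(I b) * exp (-|b|² / 2)`. The
characteristic function of `x ↦ aᵀx` at `t` is the transform at `t a`; for homogeneous `P`
vanishing at `a` the second summand therefore contributes a multiple of
`P(I σ t a) = (I σ t)^d P(a) = 0`, and only the Gaussian part is seen in the direction `a`.
-/

section Homogeneous

variable {ι R S : Type*} [CommSemiring R] [CommSemiring S] [Algebra R S] {d : ℕ}
  {P : MvPolynomial ι R}

lemma aeval_smul_of_isHomogeneous (hP : P.IsHomogeneous d) (c : S) (x : ι → S) :
    MvPolynomial.aeval (c • x) P = c ^ d * MvPolynomial.aeval x P := by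
  simp only [MvPolynomial.aeval_def, MvPolynomial.eval₂_eq, Finset.mul_sum, Pi.smul_apply,
    smul_eq_mul, mul_pow, Finset.prod_mul_distrib, Finset.prod_pow_eq_pow_sum]
  refine Finset.sum_congr rfl fun m hm => ?_
  have hdeg : ∑ i ∈ m.support, m i = d := by
    rw [← hP (MvPolynomial.mem_support_iff.mp hm), Finsupp.weight_apply]
    simp [Finsupp.sum]
  rw [hdeg, mul_left_comm]

lemma aeval_smul_algebraMap_eq_zero_of_isHomogeneous (hP : P.IsHomogeneous d) {x : ι → R}
    (hx : MvPolynomial.eval x P = 0) (c : S) :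
    MvPolynomial.aeval (c • (algebraMap R S ∘ x)) P = 0 := by
  rw [aeval_smul_of_isHomogeneous hP, MvPolynomial.aeval_algebraMap_apply,
    MvPolynomial.aeval_eq_eval, hx, map_zero, mul_zero]

end Homogeneous

section OneDimensional

lemma integrable_pow_mul_gaussianPDFReal (μ : ℝ) (v : NNReal) (j : ℕ) :
    Integrable fun x => x ^ j * gaussianPDFReal μ v x := by
  rcases eq_or_ne v 0 with rfl | hv
  · simp
  have hmoment : Integrable (fun x => x ^ j) (gaussianReal μ v) := by
    have hnorm := (memLp_id_gaussianReal (μ := μ) (v := v) j).integrable_norm_pow'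
    exact hnorm.mono' (by fun_prop) (by simp)
  rw [gaussianReal_of_var_ne_zero _ hv, integrable_withDensity_iff (measurable_gaussianPDF μ v)
    (.of_forall fun _ => gaussianPDF_lt_top)] at hmoment
  simpa only [toReal_gaussianPDF] using hmoment

lemma integrable_aeval_mul_gaussianPDFReal {R : Type*} [CommSemiring R] [Algebra R ℝ] (μ : ℝ)
    (v : NNReal) (p : Polynomial R) :
    Integrable fun x => Polynomial.aeval x p * gaussianPDFReal μ v x := by
  simp only [Polynomial.aeval_eq_sum_range, Finset.sum_mul, Algebra.smul_def, mul_assoc]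
  exact integrable_finsetSum _ fun j _ =>
    (integrable_pow_mul_gaussianPDFReal μ v j).const_mul _

lemma hasDerivAt_gaussianPDFReal (μ : ℝ) (v : NNReal) (x : ℝ) :
    HasDerivAt (gaussianPDFReal μ v) (-((x - μ) / v) * gaussianPDFReal μ v x) x := by
  have hexponent : HasDerivAt (fun y => -(y - μ) ^ 2 / (2 * v)) (-((x - μ) / v)) x := by
    refine ((((hasDerivAt_id x).sub_const μ).pow 2).neg.div_const (2 * (v : ℝ))).congr_deriv ?_
    simp only [id]
    ring
  refine (hexponent.exp.const_mul (√(2 * π * v))⁻¹).congr_deriv ?_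
  rw [gaussianPDFReal]
  ring

lemma hasDerivAt_hermiteR_mul_gaussianPDFReal (m : ℕ) (x : ℝ) :
    HasDerivAt (fun y => hermiteR m y * gaussianPDFReal 0 1 y)
      (-(hermiteR (m + 1) x * gaussianPDFReal 0 1 x)) x := by
  refine (((Polynomial.hermite m).hasDerivAt_aeval x).mul
    (hasDerivAt_gaussianPDFReal 0 1 x)).congr_deriv ?_
  simp only [hermiteR, Polynomial.hermite_succ, map_sub, map_mul, Polynomial.aeval_X,
    NNReal.coe_one]
  ring

lemma integrable_cexp_mul_I_mul {α : Type*} [MeasurableSpace α] {μ : Measure α} {θ : α → ℝ}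
    {f : α → ℂ} (hθ : AEMeasurable θ μ) (hf : Integrable f μ) :
    Integrable (fun x => Complex.exp (θ x * Complex.I) * f x) μ :=
  hf.bdd_mul (c := 1) (by fun_prop) (.of_forall fun x => (Complex.norm_exp_ofReal_mul_I _).le)

lemma integral_cexp_mul_deriv {f f' : ℝ → ℂ} (hderiv : ∀ x, HasDerivAt f (f' x) x)
    (hf : Integrable f) (hf' : Integrable f') (s : ℝ) :
    ∫ x : ℝ, Complex.exp ((s * x : ℝ) * Complex.I) * f' x
      = -(Complex.I * s) * ∫ x : ℝ, Complex.exp ((s * x : ℝ) * Complex.I) * f x := by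
  have hexp (x : ℝ) : HasDerivAt (fun y : ℝ => Complex.exp ((s * y : ℝ) * Complex.I))
      (Complex.I * s * Complex.exp ((s * x : ℝ) * Complex.I)) x := by
    refine (((hasDerivAt_id x).const_mul s).ofReal_comp.mul_const Complex.I).cexp.congr_deriv ?_
    simp only [id, mul_one, Complex.ofReal_mul]
    ring
  have hphase : AEMeasurable fun x : ℝ => s * x := by fun_prop
  have hint := integrable_cexp_mul_I_mul hphase hf
  rw [integral_mul_deriv_eq_deriv_mul_of_integrable (fun x _ => hexp x) (fun x _ => hderiv x)
    (integrable_cexp_mul_I_mul hphase hf')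
    (by simpa only [Pi.mul_def, mul_assoc] using hint.const_mul (Complex.I * s)) hint]
  simp only [mul_assoc, integral_const_mul, neg_mul]

lemma integral_cexp_mul_gaussianPDFReal (s : ℝ) :
    ∫ x : ℝ, Complex.exp ((s * x : ℝ) * Complex.I) * gaussianPDFReal 0 1 x
      = Complex.exp (-(s * s : ℝ) / 2) := by
  have hchar := charFun_gaussianReal (μ := 0) (v := 1) s
  rw [charFun_apply_real, integral_gaussianReal_eq_integral_smul one_ne_zero] at hchar
  simp only [Complex.real_smul, mul_comm (gaussianPDFReal 0 1 _ : ℂ)] at hchar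
  push_cast
  rw [hchar]
  congr 1
  push_cast
  ring

lemma integral_cexp_mul_hermiteR_mul_gaussianPDFReal (s : ℝ) (m : ℕ) :
    ∫ x : ℝ, Complex.exp ((s * x : ℝ) * Complex.I) * (hermiteR m x * gaussianPDFReal 0 1 x : ℝ)
      = (Complex.I * s) ^ m * Complex.exp (-(s * s : ℝ) / 2) := by
  induction m with
  | zero => simpa [hermiteR] using integral_cexp_mul_gaussianPDFReal s
  | succ m ih =>
    have hint (j : ℕ) : Integrable fun x => (hermiteR j x * gaussianPDFReal 0 1 x : ℝ) :=
      integrable_aeval_mul_gaussianPDFReal 0 1 (Polynomial.hermite j)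
    have hparts := integral_cexp_mul_deriv
      (fun x => (hasDerivAt_hermiteR_mul_gaussianPDFReal m x).ofReal_comp)
      (hint m).ofReal (hint (m + 1)).neg.ofReal s
    simp only [Complex.ofReal_neg, mul_neg, integral_neg, neg_mul, neg_inj] at hparts
    rw [hparts, ih, pow_succ']
    ring

end OneDimensional

section Multidimensional

open scoped Matrix

variable {ι : Type*} [Fintype ι]

lemma cexp_dotProduct_mul_prod (b x : ι → ℝ) (g : ι → ℝ → ℝ) :
    Complex.exp ((b ⬝ᵥ x : ℝ) * Complex.I) * (∏ i, g i (x i) : ℝ)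
      = ∏ i, Complex.exp ((b i * x i : ℝ) * Complex.I) * (g i (x i) : ℂ) := by
  rw [Finset.prod_mul_distrib, ← Complex.exp_sum, ← Finset.sum_mul, dotProduct,
    Complex.ofReal_sum, Complex.ofReal_prod]

lemma integral_cexp_dotProduct_mul_prod (b : ι → ℝ) (g : ι → ℝ → ℝ) :
    ∫ x : ι → ℝ, Complex.exp ((b ⬝ᵥ x : ℝ) * Complex.I) * (∏ i, g i (x i) : ℝ)
      = ∏ i, ∫ y : ℝ, Complex.exp ((b i * y : ℝ) * Complex.I) * (g i y : ℂ) := by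
  simp only [cexp_dotProduct_mul_prod]
  exact integral_fintype_prod_volume_eq_prod
    fun i (y : ℝ) => Complex.exp ((b i * y : ℝ) * Complex.I) * (g i y : ℂ)

/-- The density of the standard Gaussian measure on `ι → ℝ`. -/
noncomputable def stdGaussianPDFReal (x : ι → ℝ) : ℝ :=
  ∏ i, gaussianPDFReal 0 1 (x i)

lemma stdGaussianPDFReal_eq (x : ι → ℝ) :
    stdGaussianPDFReal x
      = (2 * π) ^ (-(Fintype.card ι : ℝ) / 2) * Real.exp (-(∑ i, x i ^ 2) / 2) := by
  simp only [stdGaussianPDFReal, gaussianPDFReal, Finset.prod_mul_distrib, Finset.prod_const,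
    Finset.card_univ, ← Real.exp_sum, NNReal.coe_one, mul_one, sub_zero, ← Finset.sum_div,
    Finset.sum_neg_distrib]
  rw [Real.sqrt_eq_rpow, ← Real.rpow_neg (by positivity), ← Real.rpow_mul_natCast (by positivity)]
  ring_nf

lemma integrable_stdGaussianPDFReal : Integrable (stdGaussianPDFReal (ι := ι)) :=
  Integrable.fintype_prod fun _ => integrable_gaussianPDFReal 0 1

lemma integral_cexp_mul_stdGaussianPDFReal (b : ι → ℝ) :
    ∫ x : ι → ℝ, Complex.exp ((b ⬝ᵥ x : ℝ) * Complex.I) * stdGaussianPDFReal x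
      = Complex.exp (-(b ⬝ᵥ b : ℝ) / 2) := by
  simp only [stdGaussianPDFReal]
  rw [integral_cexp_dotProduct_mul_prod b fun _ => gaussianPDFReal 0 1]
  simp only [integral_cexp_mul_gaussianPDFReal, ← Complex.exp_sum, ← Finset.sum_div,
    Finset.sum_neg_distrib, dotProduct, Complex.ofReal_sum]

end Multidimensional

section Renormalized

open scoped Matrix

variable {n d : ℕ} (P : MvPolynomial (Fin n) ℝ)

lemma renorm_mul_stdGaussianPDFReal (x : Fin n → ℝ) :
    renorm P x * stdGaussianPDFReal x
      = ∑ m ∈ P.support, P.coeff m * ∏ i, hermiteR (m i) (x i) * gaussianPDFReal 0 1 (x i) := by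
  simp only [renorm, stdGaussianPDFReal, Finset.sum_mul, Finset.prod_mul_distrib, mul_assoc]

lemma integrable_prod_hermiteR_mul_gaussianPDFReal {ι : Type*} [Fintype ι] (m : ι → ℕ) :
    Integrable fun x : ι → ℝ => ∏ i, hermiteR (m i) (x i) * gaussianPDFReal 0 1 (x i) :=
  Integrable.fintype_prod (f := fun i y => hermiteR (m i) y * gaussianPDFReal 0 1 y) fun i =>
    integrable_aeval_mul_gaussianPDFReal 0 1 (Polynomial.hermite (m i))

lemma integrable_renorm_mul_stdGaussianPDFReal :
    Integrable fun x => renorm P x * stdGaussianPDFReal x := by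
  simp only [renorm_mul_stdGaussianPDFReal]
  exact integrable_finsetSum _ fun m _ =>
    (integrable_prod_hermiteR_mul_gaussianPDFReal m).const_mul _

lemma integral_cexp_mul_renorm_mul_stdGaussianPDFReal (b : Fin n → ℝ) :
    ∫ x, Complex.exp ((b ⬝ᵥ x : ℝ) * Complex.I) * (renorm P x * stdGaussianPDFReal x : ℝ)
      = MvPolynomial.aeval (Complex.I • (algebraMap ℝ ℂ ∘ b)) P
        * Complex.exp (-(b ⬝ᵥ b : ℝ) / 2) := by
  have hmonomial (m : Fin n →₀ ℕ) : ∫ x, Complex.exp ((b ⬝ᵥ x : ℝ) * Complex.I)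
      * (∏ i, hermiteR (m i) (x i) * gaussianPDFReal 0 1 (x i) : ℝ)
      = (∏ i, (Complex.I * b i) ^ m i) * Complex.exp (-(b ⬝ᵥ b : ℝ) / 2) := by
    rw [integral_cexp_dotProduct_mul_prod b fun i y => hermiteR (m i) y * gaussianPDFReal 0 1 y]
    simp only [integral_cexp_mul_hermiteR_mul_gaussianPDFReal, Finset.prod_mul_distrib,
      ← Complex.exp_sum, ← Finset.sum_div, Finset.sum_neg_distrib, dotProduct, Complex.ofReal_sum]
  have hint (m : Fin n →₀ ℕ) : Integrable fun x => Complex.exp ((b ⬝ᵥ x : ℝ) * Complex.I)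
      * (∏ i, hermiteR (m i) (x i) * gaussianPDFReal 0 1 (x i) : ℝ) :=
    integrable_cexp_mul_I_mul (continuous_const.dotProduct continuous_id).aemeasurable
      (integrable_prod_hermiteR_mul_gaussianPDFReal m).ofReal
  simp only [renorm_mul_stdGaussianPDFReal, Complex.ofReal_sum, Finset.mul_sum,
    Complex.ofReal_mul (P.coeff _), mul_left_comm (Complex.exp _) (P.coeff _ : ℂ)]
  rw [integral_finsetSum _ fun m _ => (hint m).const_mul _]
  simp only [integral_const_mul, hmonomial, MvPolynomial.aeval_def, MvPolynomial.eval₂_eq',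
    Finset.sum_mul, mul_assoc, Pi.smul_apply, Function.comp_apply, smul_eq_mul,
    Complex.coe_algebraMap]

variable {P}

lemma integral_cexp_mul_renorm_inv_smul_eq_zero (hP : P.IsHomogeneous d) {b : Fin n → ℝ}
    (hb : MvPolynomial.eval b P = 0) {σ : ℝ} (hσ : σ ≠ 0) :
    ∫ x, Complex.exp ((b ⬝ᵥ x : ℝ) * Complex.I)
      * (renorm P (σ⁻¹ • x) * stdGaussianPDFReal (σ⁻¹ • x) : ℝ) = 0 := by
  have hphase (x : Fin n → ℝ) : b ⬝ᵥ x = (σ • b) ⬝ᵥ (σ⁻¹ • x) := by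
    rw [smul_dotProduct, dotProduct_smul, smul_inv_smul₀ hσ]
  have hdirection : Complex.I • (algebraMap ℝ ℂ ∘ (σ • b))
      = (Complex.I * σ) • (algebraMap ℝ ℂ ∘ b) := by
    ext i
    simp [mul_assoc]
  simp only [hphase]
  rw [Measure.integral_comp_inv_smul volume fun y =>
      Complex.exp (((σ • b) ⬝ᵥ y : ℝ) * Complex.I) * (renorm P y * stdGaussianPDFReal y : ℝ),
    integral_cexp_mul_renorm_mul_stdGaussianPDFReal, hdirection,
    aeval_smul_algebraMap_eq_zero_of_isHomogeneous hP hb, zero_mul, smul_zero]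

end Renormalized

section Density

open scoped Matrix

variable {n k d : ℕ} {σ ε : ℝ} {P : MvPolynomial (Fin n) ℝ}

lemma fdens_eq (hσ : σ ≠ 0) (x : Fin n → ℝ) :
    fdens n k σ ε P x = stdGaussianPDFReal x + (-1) ^ k * ε * (σ ^ (n + 2 * k))⁻¹
      * (renorm P (σ⁻¹ • x) * stdGaussianPDFReal (σ⁻¹ • x)) := by
  have hscale : (fun i => x i / σ) = σ⁻¹ • x := by
    ext i
    simp [div_eq_inv_mul]
  have hexp : Real.exp (-(∑ i, (σ⁻¹ • x) i ^ 2) / 2) = Real.exp (-(∑ i, x i ^ 2) / 2)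
      * Real.exp (-(1 - σ ^ 2) * (∑ i, x i ^ 2) / (2 * σ ^ 2)) := by
    rw [← Real.exp_add]
    simp only [Pi.smul_apply, smul_eq_mul, mul_pow, ← Finset.mul_sum]
    congr 1
    field
  rw [fdens, hscale, stdGaussianPDFReal_eq, stdGaussianPDFReal_eq, hexp, Fintype.card_fin]
  ring

lemma integrable_fdens (hσ : σ ≠ 0) : Integrable (fdens n k σ ε P) := by
  rw [funext (fdens_eq hσ)]
  exact integrable_stdGaussianPDFReal.add
    (((integrable_renorm_mul_stdGaussianPDFReal P).comp_smul (inv_ne_zero hσ)).const_mul _)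

lemma mul_le_one_of_le_inv_iSup {α : Type*} {F : α → ℝ} (hF : ∀ x, 0 ≤ F x) {r : ℝ}
    (hr : r ≤ (⨆ x, F x)⁻¹) (x : α) : r * F x ≤ 1 := by
  by_cases hbdd : BddAbove (Set.range F)
  · calc r * F x ≤ (⨆ x, F x)⁻¹ * F x := mul_le_mul_of_nonneg_right hr (hF x)
      _ ≤ (⨆ x, F x)⁻¹ * ⨆ x, F x :=
        mul_le_mul_of_nonneg_left (le_ciSup hbdd x) (inv_nonneg.mpr (Real.iSup_nonneg hF))
      _ ≤ 1 := inv_mul_le_one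
  · -- An unbounded family has supremum `0`, so `r ≤ 0`.
    rw [Real.iSup_of_not_bddAbove hbdd, inv_zero] at hr
    exact (mul_nonpos_of_nonpos_of_nonneg hr (hF x)).trans zero_le_one

lemma fdens_nonneg (hσ : 0 < σ) (hε : |ε| ≤ (Kconst n k σ P)⁻¹) (x : Fin n → ℝ) :
    0 ≤ fdens n k σ ε P x := by
  have hK := mul_le_one_of_le_inv_iSup (fun y => by positivity) hε fun i => x i / σ
  have hexponent : -(1 - σ ^ 2) * (∑ i, (x i / σ) ^ 2) / 2
      = -(1 - σ ^ 2) * (∑ i, x i ^ 2) / (2 * σ ^ 2) := by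
    simp only [div_pow, ← Finset.sum_div]
    field
  have habs : |(-1) ^ k * ε * (σ ^ (n + 2 * k))⁻¹ * renorm P (fun i => x i / σ)
      * Real.exp (-(1 - σ ^ 2) * (∑ i, x i ^ 2) / (2 * σ ^ 2))| ≤ 1 := by
    rw [hexponent] at hK
    simpa only [abs_mul, abs_pow, abs_neg, abs_one, one_pow, one_mul, abs_inv, Real.abs_exp,
      abs_of_pos hσ, mul_assoc] using hK
  exact mul_nonneg (by positivity) (by linarith [neg_le_of_abs_le habs])

lemma integral_cexp_mul_fdens (hσ : σ ≠ 0) (hP : P.IsHomogeneous d) {b : Fin n → ℝ}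
    (hb : MvPolynomial.eval b P = 0) :
    ∫ x, Complex.exp ((b ⬝ᵥ x : ℝ) * Complex.I) * fdens n k σ ε P x
      = Complex.exp (-(b ⬝ᵥ b : ℝ) / 2) := by
  have hphase : AEMeasurable fun x : Fin n → ℝ => b ⬝ᵥ x :=
    (continuous_const.dotProduct continuous_id).aemeasurable
  have hgaussian : Integrable fun x =>
      Complex.exp ((b ⬝ᵥ x : ℝ) * Complex.I) * (stdGaussianPDFReal x : ℂ) :=
    integrable_cexp_mul_I_mul hphase integrable_stdGaussianPDFReal.ofReal
  have hperturbation : Integrable fun x => Complex.exp ((b ⬝ᵥ x : ℝ) * Complex.I)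
      * (renorm P (σ⁻¹ • x) * stdGaussianPDFReal (σ⁻¹ • x) : ℝ) :=
    integrable_cexp_mul_I_mul hphase
      ((integrable_renorm_mul_stdGaussianPDFReal P).comp_smul (inv_ne_zero hσ)).ofReal
  simp only [fdens_eq hσ, Complex.ofReal_add, mul_add,
    Complex.ofReal_mul ((-1) ^ k * ε * (σ ^ (n + 2 * k))⁻¹), mul_left_comm (Complex.exp _)]
  rw [integral_add hgaussian (hperturbation.const_mul _), integral_const_mul,
    integral_cexp_mul_stdGaussianPDFReal, integral_cexp_mul_renorm_inv_smul_eq_zero hP hb hσ,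
    mul_zero, add_zero]

lemma charFun_map_withDensity_ofReal {α : Type*} [MeasurableSpace α] {ν : Measure α} {f : α → ℝ}
    (hf : Integrable f ν) (hf_nonneg : ∀ x, 0 ≤ f x) {X : α → ℝ} (hX : Measurable X) (t : ℝ) :
    charFun ((ν.withDensity fun x => ENNReal.ofReal (f x)).map X) t
      = ∫ x, Complex.exp ((t * X x : ℝ) * Complex.I) * f x ∂ν := by
  rw [charFun_apply_real, integral_map hX.aemeasurable (by fun_prop),
    integral_withDensity_eq_integral_toReal_smul₀ hf.aemeasurable.ennreal_ofReal (by simp)]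
  simp only [ENNReal.toReal_ofReal (hf_nonneg _), Complex.real_smul, mul_comm (f _ : ℂ),
    Complex.ofReal_mul]

theorem stmt_6_general (hσ : σ ≠ 0) (hP : P.IsHomogeneous d)
    (hf : ∀ x, 0 ≤ fdens n k σ ε P x) {a : Fin n → ℝ} (ha : MvPolynomial.eval a P = 0) :
    Measure.map (fun x => ∑ i, a i * x i)
        (volume.withDensity fun x => ENNReal.ofReal (fdens n k σ ε P x))
      = gaussianReal 0 (Real.toNNReal (∑ i, a i ^ 2)) := by
  have hint : Integrable (fdens n k σ ε P) := integrable_fdens hσ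
  have := isFiniteMeasure_withDensity_ofReal hint.hasFiniteIntegral
  refine Measure.ext_of_charFun (funext fun t => ?_)
  have hta : MvPolynomial.eval (t • a) P = 0 :=
    aeval_smul_algebraMap_eq_zero_of_isHomogeneous hP ha t
  have hphase (x : Fin n → ℝ) : t * ∑ i, a i * x i = (t • a) ⬝ᵥ x := by
    rw [smul_dotProduct, smul_eq_mul, dotProduct]
  have hnorm : (t • a) ⬝ᵥ (t • a) = (∑ i, a i ^ 2) * t ^ 2 := by
    rw [smul_dotProduct, dotProduct_smul]
    simp only [smul_eq_mul, dotProduct, ← sq]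
    ring
  rw [charFun_map_withDensity_ofReal hint hf (by fun_prop), charFun_gaussianReal,
    Real.coe_toNNReal _ (by positivity)]
  simp only [hphase]
  rw [integral_cexp_mul_fdens hσ hP hta, hnorm]
  congr 1
  push_cast
  ring

end Density

/-- Under the probability measure μ with density f(·;ε,σ,P), if a ≠ 0 and P(a) = 0 then
the pushforward of μ under x ↦ aᵀx is the Gaussian with mean 0 and variance |a|². -/
theorem stmt_6 (n k : ℕ) (σ : ℝ) (hσ0 : 0 < σ) (hσ1 : σ < 1)
    (P : MvPolynomial (Fin n) ℝ) (hP : P.IsHomogeneous (2 * k)) (hP0 : P ≠ 0)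
    (ε : ℝ) (hε : |ε| ≤ (Kconst n k σ P)⁻¹)
    (μ : Measure (Fin n → ℝ))
    (hμ : μ = volume.withDensity (fun x => ENNReal.ofReal (fdens n k σ ε P x)))
    (a : Fin n → ℝ) (ha : a ≠ 0) (haP : MvPolynomial.eval a P = 0) :
    Measure.map (fun x => ∑ i, a i * x i) μ
      = gaussianReal 0 (Real.toNNReal (∑ i, a i ^ 2)) :=
  hμ ▸ stmt_6_general hσ0.ne' hP (fdens_nonneg hσ0 hε) haP
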